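/- Let J ⊆ A be an ideal. Let M_{12}, M_{21} be m×m matrices, M'_{12}, M'_{21} be m'×m' matrices, and D_1, D_2 be m'×m matrices over A, and assume that every entry of M_{12}·M_{21} − 1, of M'_{12}·M'_{21} − 1, of M'_{12}·D_2 − D_1·M_{12}, and of M'_{21}·D_1 − D_2·M_{21} lies in J. Then every entry of the Ω_{A|k}-valued matrix D_1·M_{12}·d(M_{21}) + M'_{12}·d(M'_{21}·D_1 − D_2·M_{21}) + M'_{12}·d(D_2)·M_{21} − d(D_1) − M'_{12}·d(M'_{21})·D_1 lies in J·Ω_{A|k}. -/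

import Mathlib

/-- Entrywise application of the universal derivation `d : A → Ω_{A|k}` to a matrix. -/
noncomputable def matD (k : Type*) {A : Type*} [CommRing k] [CommRing A] [Algebra k A]
    {m n : ℕ} (M : Matrix (Fin m) (Fin n) A) :
    Matrix (Fin m) (Fin n) (KaehlerDifferential k A) :=
  M.map (KaehlerDifferential.D k A)

/-- Product of a matrix over `A` with a matrix over an `A`-module `V`, using the scalar
action of `A` on `V`. -/
def matLMul {A V : Type*} [CommRing A] [AddCommMonoid V] [Module A V]
    {m n p : ℕ} (M : Matrix (Fin m) (Fin n) A) (W : Matrix (Fin n) (Fin p) V) :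
    Matrix (Fin m) (Fin p) V :=
  fun u v => ∑ x : Fin n, M u x • W x v

/-- Product of a matrix over an `A`-module `V` with a matrix over `A`, using the scalar
action of `A` on `V`. -/
def matRMul {A V : Type*} [CommRing A] [AddCommMonoid V] [Module A V]
    {m n p : ℕ} (W : Matrix (Fin m) (Fin n) V) (M : Matrix (Fin n) (Fin p) A) :
    Matrix (Fin m) (Fin p) V :=
  fun u v => ∑ x : Fin n, M x v • W u x

section helpers

variable {A V : Type*} [CommRing A] [AddCommGroup V] [Module A V] {m n p q : ℕ}

theorem matLMul_assoc' (M : Matrix (Fin m) (Fin n) A) (N : Matrix (Fin n) (Fin p) A)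
    (W : Matrix (Fin p) (Fin q) V) : matLMul M (matLMul N W) = matLMul (M * N) W := by
  funext u v
  simp only [matLMul, Matrix.mul_apply, Finset.smul_sum, Finset.sum_smul, smul_smul]
  exact Finset.sum_comm

theorem matLRMul_assoc' (M : Matrix (Fin m) (Fin n) A) (W : Matrix (Fin n) (Fin p) V)
    (N : Matrix (Fin p) (Fin q) A) :
    matLMul M (matRMul W N) = matRMul (matLMul M W) N := by
  funext u v
  simp only [matLMul, matRMul, Finset.smul_sum]
  rw [Finset.sum_comm]
  refine Finset.sum_congr rfl fun x _ => Finset.sum_congr rfl fun y _ => ?_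
  exact smul_comm _ _ _

theorem matLMul_add' (M : Matrix (Fin m) (Fin n) A) (W X : Matrix (Fin n) (Fin p) V) :
    matLMul M (W + X) = matLMul M W + matLMul M X := by
  funext u v
  simp [matLMul, Matrix.add_apply, smul_add, Finset.sum_add_distrib]

theorem matLMul_sub' (M : Matrix (Fin m) (Fin n) A) (W X : Matrix (Fin n) (Fin p) V) :
    matLMul M (W - X) = matLMul M W - matLMul M X := by
  funext u v
  simp [matLMul, Matrix.sub_apply, smul_sub, Finset.sum_sub_distrib]

theorem matLMul_sub_left' (M N : Matrix (Fin m) (Fin n) A) (W : Matrix (Fin n) (Fin p) V) :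
    matLMul (M - N) W = matLMul M W - matLMul N W := by
  funext u v
  simp [matLMul, Matrix.sub_apply, sub_smul, Finset.sum_sub_distrib]

theorem matLMul_one' (W : Matrix (Fin n) (Fin p) V) :
    matLMul (1 : Matrix (Fin n) (Fin n) A) W = W := by
  funext u v
  simp [matLMul, Matrix.one_apply]

theorem matLMul_mem' (J : Ideal A) (M : Matrix (Fin m) (Fin n) A) (W : Matrix (Fin n) (Fin p) V)
    (h : ∀ u v, M u v ∈ J) (u : Fin m) (v : Fin p) :
    matLMul M W u v ∈ J • (⊤ : Submodule A V) :=
  Submodule.sum_mem _ fun x _ => Submodule.smul_mem_smul (h u x) Submodule.mem_top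

theorem matD_sub' (k : Type*) [CommRing k] [Algebra k A] (M N : Matrix (Fin m) (Fin n) A) :
    matD k (M - N) = matD k M - matD k N := by
  funext u v
  simp [matD]

theorem matD_mul' (k : Type*) [CommRing k] [Algebra k A] (M : Matrix (Fin m) (Fin n) A)
    (N : Matrix (Fin n) (Fin p) A) :
    matD k (M * N) = matLMul M (matD k N) + matRMul (matD k M) N := by
  funext u v
  simp [matD, matLMul, matRMul, Matrix.mul_apply, Finset.sum_add_distrib]

end helpers

/-- Let `J ⊆ A` be an ideal, `M₁₂, M₂₁` be `m × m` matrices, `M'₁₂, M'₂₁` be `m' × m'`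
matrices and `D₁, D₂` be `m' × m` matrices over `A`, such that every entry of
`M₁₂·M₂₁ - 1`, of `M'₁₂·M'₂₁ - 1`, of `M'₁₂·D₂ - D₁·M₁₂` and of `M'₂₁·D₁ - D₂·M₂₁` lies
in `J`.  Then every entry of the `Ω_{A|k}`-valued matrix
`D₁·M₁₂·d(M₂₁) + M'₁₂·d(M'₂₁·D₁ - D₂·M₂₁) + M'₁₂·d(D₂)·M₂₁ - d(D₁) - M'₁₂·d(M'₂₁)·D₁`
lies in `J · Ω_{A|k}`. -/
theorem statement13 {k A : Type*} [CommRing k] [CommRing A] [Algebra k A]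
    (J : Ideal A) {m m' : ℕ}
    (M12 M21 : Matrix (Fin m) (Fin m) A)
    (M'12 M'21 : Matrix (Fin m') (Fin m') A)
    (D1 D2 : Matrix (Fin m') (Fin m) A)
    (hM : ∀ u v : Fin m, (M12 * M21 - 1) u v ∈ J)
    (hM' : ∀ u v : Fin m', (M'12 * M'21 - 1) u v ∈ J)
    (hD1 : ∀ u : Fin m', ∀ v : Fin m, (M'12 * D2 - D1 * M12) u v ∈ J)
    (hD2 : ∀ u : Fin m', ∀ v : Fin m, (M'21 * D1 - D2 * M21) u v ∈ J) :
    ∀ u : Fin m', ∀ v : Fin m,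
      (matLMul (D1 * M12) (matD k M21) +
        matLMul M'12 (matD k (M'21 * D1 - D2 * M21)) +
        matRMul (matLMul M'12 (matD k D2)) M21 -
        matD k D1 -
        matRMul (matLMul M'12 (matD k M'21)) D1) u v ∈
      J • (⊤ : Submodule A (KaehlerDifferential k A)) := by
  intro u v
  have key : matLMul (D1 * M12) (matD k M21) +
        matLMul M'12 (matD k (M'21 * D1 - D2 * M21)) +
        matRMul (matLMul M'12 (matD k D2)) M21 -
        matD k D1 -
        matRMul (matLMul M'12 (matD k M'21)) D1 =
      matLMul (M'12 * M'21 - 1) (matD k D1) -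
        matLMul (M'12 * D2 - D1 * M12) (matD k M21) := by
    simp only [matD_sub', matD_mul', matLMul_sub', matLMul_add', matLMul_assoc',
      matLRMul_assoc', matLMul_sub_left', matLMul_one']
    abel
  rw [key]
  exact Submodule.sub_mem _ (matLMul_mem' J _ _ hM' u v) (matLMul_mem' J _ _ hD1 u v)
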